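/- Fix k ≥ 2 and suppose m ≡_k A_0 b. Then: (1) if b > ⟨m⟩₋₁, then m − 1 has simplified k-normal form m − 1 ≃_k A_0(b−1) · (k−1) + (k^{b−1} − 1); (2) if b = ⟨m⟩₋₁ > 0, then m − 1 ≃_k b · p + q for some p < k^{b−1} and some q < b. -/

import Mathlib

/-- The base-`k` Ackermann function `A_a(k, b)`:
`A_0(k, b) = k ^ b` and `A_{a+1}(k, b) = A_a^k(k, A_{a+1}(k, b-1))`,
with the auxiliary value `A_{a+1}(k, -1) = 1`
(equivalently, `A_{a+1}(k, b) = (A_a^k)^[b+1] (1)`). -/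
def Ack (k : ℕ) : ℕ → ℕ → ℕ
  | 0, b => k ^ b
  | a + 1, b => ((Ack k a)^[k])^[b + 1] 1

/-- `IsSandwich k m n a b ms` says that `(A_{a i}(k, b i))_{i=1}^n` is a
`k`-sandwiching sequence for `m`, with sandwiching values `(ms i)_{i=0}^n`:
`ms 0 = 0`; for each `i < n`, `A_{a (i+1)} (ms i) ≤ m < A_{a (i+1) + 1} (ms i)`,
`A_{a (i+1)} (b (i+1)) ≤ m < A_{a (i+1)} (b (i+1) + 1)`, and
`ms (i+1) = A_{a (i+1)} (b (i+1))`; and `A_0 (ms n) > m`. -/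
structure IsSandwich (k m n : ℕ) (a b ms : ℕ → ℕ) : Prop where
  ms_zero : ms 0 = 0
  idx_lo : ∀ i < n, Ack k (a (i + 1)) (ms i) ≤ m
  idx_hi : ∀ i < n, m < Ack k (a (i + 1) + 1) (ms i)
  arg_lo : ∀ i < n, Ack k (a (i + 1)) (b (i + 1)) ≤ m
  arg_hi : ∀ i < n, m < Ack k (a (i + 1)) (b (i + 1) + 1)
  ms_succ : ∀ i < n, ms (i + 1) = Ack k (a (i + 1)) (b (i + 1))
  halt : m < Ack k 0 (ms n)

/-- `NF k m a b c` says that `m ≡_k A_a b + c`, i.e. `m` has `k`-normal form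
`A_a b + c` (so `m = A_a b + c` and the `k`-sandwiching sequence of `m` ends
with the pair `(a, b)`). -/
def NF (k m a b c : ℕ) : Prop :=
  m = Ack k a b + c ∧
    ∃ n as bs ms, 1 ≤ n ∧ IsSandwich k m n as bs ms ∧ a = as n ∧ b = bs n

/-- `SNF k m d p q` says that `m ≃_k d · p + q`, i.e. `m` has simplified
`k`-normal form `d · p + q`: `m ≡_k A_a b + c` for some `a`, `b`, `c` with
`d = A_a b`, `m = d * p + q` and `q < d`. -/
def SNF (k m d p q : ℕ) : Prop :=
  ∃ a b c, NF k m a b c ∧ d = Ack k a b ∧ m = d * p + q ∧ q < d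

/-!
All sandwiching values before the last one are strictly below `m`, and a sandwiching step stays
valid for every `m' ≤ m` that is at least its next value. Hence the sandwiching sequences of
`m = k ^ b` and `m - 1` can differ only in the last pair. If `⟨m⟩₋₁ < b`, that pair becomes
`A_0 (b - 1)`. If `⟨m⟩₋₁ = b`, then `A_0 ⟨m⟩₋₁ = m > m - 1`, so the sequence of `m - 1` stops one
step earlier, at `b`, and `k ≤ b` bounds the quotient of `m - 1` by `b`.
-/

section

variable {k : ℕ}

theorem add_le_iterate_of_lt_map {f : ℕ → ℕ} (hf : ∀ x, x < f x) (j x : ℕ) : x + j ≤ f^[j] x := by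
  induction j with
  | zero => rfl
  | succ j ih =>
    rw [Function.iterate_succ_apply']
    exact ih.trans_lt (hf _)

namespace Ack

theorem zero_apply (k b : ℕ) : Ack k 0 b = k ^ b := rfl

theorem succ_apply_zero (k a : ℕ) : Ack k (a + 1) 0 = (Ack k a)^[k] 1 := rfl

theorem succ_apply_succ (k a b : ℕ) :
    Ack k (a + 1) (b + 1) = (Ack k a)^[k] (Ack k (a + 1) b) :=
  Function.iterate_succ_apply' _ _ _

theorem lt_apply (hk : 2 ≤ k) (a b : ℕ) : b < Ack k a b := by
  induction a generalizing b with
  | zero => exact Nat.lt_pow_self hk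
  | succ a ih =>
    induction b with
    | zero =>
      rw [succ_apply_zero]
      exact (by omega : 0 < 1 + k).trans_le (add_le_iterate_of_lt_map ih k 1)
    | succ b ihb =>
      rw [succ_apply_succ]
      exact (by omega : b + 1 < Ack k (a + 1) b + k).trans_le (add_le_iterate_of_lt_map ih k _)

theorem strictMono (hk : 2 ≤ k) (a : ℕ) : StrictMono (Ack k a) := by
  cases a with
  | zero => exact pow_right_strictMono₀ hk
  | succ a =>
    refine strictMono_nat_of_lt_succ fun b => ?_
    rw [succ_apply_succ]
    exact (by omega : Ack k (a + 1) b < Ack k (a + 1) b + k).trans_le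
      (add_le_iterate_of_lt_map (lt_apply hk a) k _)

theorem base_le_succ_apply (hk : 2 ≤ k) (a b : ℕ) : k ≤ Ack k (a + 1) b :=
  calc
    k ≤ 1 + k := Nat.le_add_left k 1
    _ ≤ (Ack k a)^[k] 1 := add_le_iterate_of_lt_map (lt_apply hk a) k 1
    _ = Ack k (a + 1) 0 := (succ_apply_zero k a).symm
    _ ≤ Ack k (a + 1) b := (strictMono hk (a + 1)).monotone b.zero_le

end Ack

/-- A single step of the sandwiching procedure for `m`: from the value `v` it selects the index `a`
and the argument `b`, and passes to the next value `w = A_a b`. A sandwiching sequence is a chain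
of such steps starting at `0`. -/
structure IsSandwichStep (k m v a b w : ℕ) : Prop where
  idx_lo : Ack k a v ≤ m
  idx_hi : m < Ack k (a + 1) v
  arg_lo : Ack k a b ≤ m
  arg_hi : m < Ack k a (b + 1)
  val_eq : w = Ack k a b

namespace IsSandwichStep

variable {m v a b w : ℕ}

theorem val_le_arg (hk : 2 ≤ k) (h : IsSandwichStep k m v a b w) : v ≤ b :=
  Nat.lt_succ_iff.mp <| (Ack.strictMono hk a).lt_iff_lt.mp <| h.idx_lo.trans_lt h.arg_hi

theorem val_lt_next (hk : 2 ≤ k) (h : IsSandwichStep k m v a b w) : v < w :=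
  calc
    v ≤ b := h.val_le_arg hk
    _ < Ack k a b := Ack.lt_apply hk a b
    _ = w := h.val_eq.symm

theorem base_le_next (hk : 2 ≤ k) (hkm : k ≤ m) (h : IsSandwichStep k m v a b w) : k ≤ w := by
  rw [h.val_eq]
  cases a with
  | zero =>
    have hb : b ≠ 0 := by
      rintro rfl
      have hmk : m < k := by simpa only [Ack.zero_apply, zero_add, pow_one] using h.arg_hi
      exact hmk.not_ge hkm
    exact Nat.le_self_pow hb k
  | succ a => exact Ack.base_le_succ_apply hk a b

theorem of_val_le_arg (hk : 2 ≤ k) (hvb : v ≤ b) (idx_hi : m < Ack k (a + 1) v)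
    (arg_lo : Ack k a b ≤ m) (arg_hi : m < Ack k a (b + 1)) :
    IsSandwichStep k m v a b (Ack k a b) where
  idx_lo := ((Ack.strictMono hk a).monotone hvb).trans arg_lo
  idx_hi := idx_hi
  arg_lo := arg_lo
  arg_hi := arg_hi
  val_eq := rfl

theorem anti {m' : ℕ} (hk : 2 ≤ k) (h : IsSandwichStep k m v a b w) (hw : w ≤ m')
    (hm : m' ≤ m) : IsSandwichStep k m' v a b w := by
  have hvb := h.val_le_arg hk
  obtain ⟨-, idx_hi, -, arg_hi, rfl⟩ := h
  exact of_val_le_arg hk hvb (hm.trans_lt idx_hi) hw (hm.trans_lt arg_hi)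

end IsSandwichStep

namespace IsSandwich

variable {m n : ℕ} {a b ms : ℕ → ℕ}

theorem step (h : IsSandwich k m n a b ms) {i : ℕ} (hi : i < n) :
    IsSandwichStep k m (ms i) (a (i + 1)) (b (i + 1)) (ms (i + 1)) :=
  ⟨h.idx_lo i hi, h.idx_hi i hi, h.arg_lo i hi, h.arg_hi i hi, h.ms_succ i hi⟩

theorem of_steps (ms_zero : ms 0 = 0)
    (steps : ∀ i < n, IsSandwichStep k m (ms i) (a (i + 1)) (b (i + 1)) (ms (i + 1)))
    (halt : m < Ack k 0 (ms n)) : IsSandwich k m n a b ms :=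
  ⟨ms_zero, fun i hi => (steps i hi).idx_lo, fun i hi => (steps i hi).idx_hi,
    fun i hi => (steps i hi).arg_lo, fun i hi => (steps i hi).arg_hi,
    fun i hi => (steps i hi).val_eq, halt⟩

theorem ms_le_ms (hk : 2 ≤ k) (h : IsSandwich k m n a b ms) {i j : ℕ} (hij : i ≤ j)
    (hj : j ≤ n) : ms i ≤ ms j := by
  induction j, hij using Nat.le_induction with
  | base => rfl
  | succ j _ ih => exact (ih (by omega)).trans ((h.step hj).val_lt_next hk).le

theorem step_of_le (hk : 2 ≤ k) (h : IsSandwich k m n a b ms) {m' l i : ℕ} (hl : l ≤ n)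
    (hlm : ms l ≤ m') (hm : m' ≤ m) (hi : i < l) :
    IsSandwichStep k m' (ms i) (a (i + 1)) (b (i + 1)) (ms (i + 1)) :=
  (h.step (hi.trans_le hl)).anti hk ((h.ms_le_ms hk hi hl).trans hlm) hm

theorem truncate (hk : 2 ≤ k) (h : IsSandwich k m n a b ms) {m' l : ℕ} (hl : l ≤ n)
    (hlm : ms l ≤ m') (hm : m' ≤ m) (halt : m' < Ack k 0 (ms l)) :
    IsSandwich k m' l a b ms :=
  of_steps h.ms_zero (fun _ hi => h.step_of_le hk hl hlm hm hi) halt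

theorem update_last_arg (hk : 2 ≤ k) (h : IsSandwich k m (n + 1) a b ms) {m' c : ℕ}
    (hc : ms n ≤ c) (hm : m' ≤ m) (arg_lo : Ack k (a (n + 1)) c ≤ m')
    (arg_hi : m' < Ack k (a (n + 1)) (c + 1)) (halt : m' < Ack k 0 (Ack k (a (n + 1)) c)) :
    IsSandwich k m' (n + 1) a (Function.update b (n + 1) c)
      (Function.update ms (n + 1) (Ack k (a (n + 1)) c)) := by
  refine of_steps ?_ (fun i hi => ?_) ?_
  · rw [Function.update_of_ne n.succ_ne_zero.symm, h.ms_zero]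
  · rw [Function.update_of_ne hi.ne]
    obtain hin | rfl := Nat.lt_succ_iff_lt_or_eq.mp hi
    · have hne : i + 1 ≠ n + 1 := by omega
      rw [Function.update_of_ne hne, Function.update_of_ne hne]
      have hnm : ms n ≤ m' := hc.trans ((Ack.lt_apply hk _ c).le.trans arg_lo)
      exact h.step_of_le hk n.le_succ hnm hm hin
    · rw [Function.update_self, Function.update_self]
      exact .of_val_le_arg hk hc (hm.trans_lt (h.idx_hi i hi)) arg_lo arg_hi
  · rwa [Function.update_self]

theorem snf (h : IsSandwich k m (n + 1) a b ms) {p q : ℕ} (hm : m = ms (n + 1) * p + q)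
    (hq : q < ms (n + 1)) : SNF k m (ms (n + 1)) p q := by
  have last := h.step n.lt_succ_self
  have hnf : NF k m (a (n + 1)) (b (n + 1)) (m - Ack k (a (n + 1)) (b (n + 1))) :=
    ⟨(Nat.add_sub_of_le last.arg_lo).symm, n + 1, a, b, ms, n.succ_pos, h, rfl, rfl⟩
  exact ⟨_, _, _, hnf, last.val_eq, hm, hq⟩

theorem snf_pow_pred_of_ms_le (hk : 2 ≤ k) {c : ℕ}
    (h : IsSandwich k (k ^ (c + 1)) (n + 1) a b ms) (ha : a (n + 1) = 0) (hc : ms n ≤ c) :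
    SNF k (k ^ (c + 1) - 1) (Ack k 0 c) (k - 1) (k ^ c - 1) := by
  have hpos : 0 < k ^ c := by positivity
  have hlt : k ^ c < k ^ (c + 1) := Nat.pow_lt_pow_succ hk
  have halt : k ^ (c + 1) ≤ k ^ k ^ c := Nat.pow_le_pow_right (by omega) (Nat.lt_pow_self hk)
  have hs := h.update_last_arg hk (m' := k ^ (c + 1) - 1) hc (Nat.sub_le _ _)
    (by rw [ha, Ack.zero_apply]; omega) (by rw [ha, Ack.zero_apply]; omega)
    (by rw [ha, Ack.zero_apply, Ack.zero_apply]; omega)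
  have hdigits : k ^ (c + 1) - 1 = k ^ c * (k - 1) + (k ^ c - 1) := by
    obtain ⟨l, rfl⟩ := Nat.exists_eq_add_of_le' (one_le_two.trans hk)
    rw [pow_succ, mul_add_one, Nat.add_sub_cancel]
    omega
  have hsnf := hs.snf (p := k - 1) (q := k ^ c - 1)
  rw [Function.update_self, ha, Ack.zero_apply] at hsnf
  exact hsnf hdigits (by omega)

theorem snf_pow_ms_pred (hk : 2 ≤ k) (h : IsSandwich k (k ^ ms n) (n + 1) a b ms)
    (hpos : 0 < ms n) :
    ∃ p q, p < k ^ (ms n - 1) ∧ q < ms n ∧ SNF k (k ^ ms n - 1) (ms n) p q := by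
  obtain _ | n := n
  · exact absurd h.ms_zero hpos.ne'
  set v := ms (n + 1)
  have hvm : v < k ^ v := Nat.lt_pow_self hk
  have hkv : k ≤ v := (h.step (by omega : n < n + 2)).base_le_next hk (Nat.le_self_pow hpos.ne' k)
  have hquot : (k ^ v - 1) / v < k ^ (v - 1) := by
    rw [Nat.div_lt_iff_lt_mul hpos]
    calc
      k ^ v - 1 < k ^ v := by omega
      _ = k ^ (v - 1) * k := (pow_sub_one_mul hpos.ne' k).symm
      _ ≤ k ^ (v - 1) * v := Nat.mul_le_mul_left _ hkv
  have hs : IsSandwich k (k ^ v - 1) (n + 1) a b ms :=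
    h.truncate hk (n + 1).le_succ (by omega) (Nat.sub_le _ _) (Nat.sub_one_lt (by omega))
  exact ⟨_, _, hquot, Nat.mod_lt _ hpos, hs.snf (Nat.div_add_mod _ _).symm (Nat.mod_lt _ hpos)⟩

end IsSandwich

end

theorem stmt_10 (k n m b : ℕ) (aseq bseq ms : ℕ → ℕ) (hk : 2 ≤ k) (hn : 1 ≤ n)
    (hs : IsSandwich k m n aseq bseq ms) (hm : m = Ack k 0 b)
    (han : aseq n = 0) (hbn : bseq n = b) :
    (ms (n - 1) < b → SNF k (m - 1) (Ack k 0 (b - 1)) (k - 1) (k ^ (b - 1) - 1)) ∧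
      (b = ms (n - 1) → 0 < b →
        ∃ p q, p < k ^ (b - 1) ∧ q < b ∧ SNF k (m - 1) b p q) := by
  obtain ⟨n, rfl⟩ := Nat.exists_eq_add_of_le' hn
  rw [Ack.zero_apply] at hm
  subst hm
  rw [Nat.add_sub_cancel]
  refine ⟨fun hlt => ?_, ?_⟩
  · obtain ⟨c, rfl⟩ := Nat.exists_eq_add_one_of_ne_zero (Nat.ne_zero_of_lt hlt)
    exact hs.snf_pow_pred_of_ms_le hk han (Nat.lt_succ_iff.mp hlt)
  · rintro rfl hpos
    exact hs.snf_pow_ms_pred hk hpos
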